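/- arXiv:1609.09379 — 10 statements merged into one kernel-verified Lean document; each statement's English description precedes it below -/
import Mathlib

section
/- Let n = 2m for a positive integer m, and let α, β be nonzero elements of F_{q^n} satisfying α^{q^m} + α = 0 and β^{q^m + 1} = 1. Then the map M : F_{q^n} → F_{q^n} given by M(x) = αβ·x^{q^m} + α·x is F_q-linear, is not the zero map, and satisfies M(M(x)) = 0 for all x ∈ F_{q^n}. -/
/-!
Let `σ` be the `m`-th power of the `q`-Frobenius, an automorphism of order two of `F_{q^n}`.
Then `M = α (1 + β σ)`. Since `σ α = -α`, we have `(1 + β σ) α = α (1 - β σ)`, so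
`M² = α² (1 - β σ) (1 + β σ) = α² (1 - (β σ)²)`, and `(β σ)² = β σ(β) σ² = 1`.
If `M` vanished, then its value at `1` would give `β = -1`, and hence `σ = 1`.
-/

section TwistedMap

variable {R A : Type*} [CommSemiring R] [CommRing A] [Algebra R A]

/-- The `R`-linear map `x ↦ α * β * σ x + α * x` attached to an `R`-algebra endomorphism `σ`.
For `σ` a power of the Frobenius it is the map induced by a linearized binomial. -/
def twistedMap (σ : A →ₐ[R] A) (α β : A) : Module.End R A :=
  (α * β) • σ.toLinearMap + α • 1

variable {σ : A →ₐ[R] A} {α β : A}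

theorem twistedMap_apply (x : A) : twistedMap σ α β x = α * β * σ x + α * x := rfl

theorem twistedMap_twistedMap_apply (hσ : Function.Involutive σ) (hα : σ α + α = 0)
    (hβ : β * σ β = 1) (x : A) : twistedMap σ α β (twistedMap σ α β x) = 0 := by
  simp only [twistedMap_apply, map_add, map_mul, hσ x]
  linear_combination α * σ α * x * hβ + (α * x + α * β * σ x) * hα

theorem twistedMap_ne_zero (hσ : σ ≠ 1) (hα : IsLeftRegular α) : twistedMap σ α β ≠ 0 := by
  intro hzero
  have hcancel (x : A) : β * σ x + x = 0 := by
    have hx : α * β * σ x + α * x = 0 := LinearMap.congr_fun hzero x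
    exact hα (by linear_combination hx)
  have hβ : β = -1 := by simpa [eq_neg_iff_add_eq_zero] using hcancel 1
  refine hσ (AlgHom.ext fun x => ?_)
  rw [AlgHom.one_apply]
  linear_combination σ x * hβ - hcancel x

end TwistedMap

section Frobenius

variable (F : Type*) [Field F] [Fintype F]

theorem frobeniusAlgHom_pow_apply {A : Type*} [CommRing A] [Algebra F A] (m : ℕ) (x : A) :
    (FiniteField.frobeniusAlgHom F A ^ m) x = x ^ Fintype.card F ^ m := by
  rw [AlgHom.coe_pow, FiniteField.coe_frobeniusAlgHom, pow_iterate]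

theorem orderOf_frobeniusAlgHom_pow {K : Type*} [Field K] [Finite K] [Algebra F K] {d m : ℕ}
    (h : Module.finrank F K = d * m) : orderOf (FiniteField.frobeniusAlgHom F K ^ m) = d := by
  have hm : 0 < m := Nat.pos_of_mul_pos_left (h ▸ Module.finrank_pos)
  have horder := (FiniteField.orderOf_frobeniusAlgHom F K).trans h
  rw [orderOf_pow_of_dvd hm.ne' (horder ▸ dvd_mul_left m d), horder, Nat.mul_div_cancel d hm]

theorem finrank_eq_of_card_eq_pow {V : Type*} [AddCommGroup V] [Module F V] [Fintype V] {n : ℕ}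
    (h : Fintype.card V = Fintype.card F ^ n) : Module.finrank F V = n :=
  Nat.pow_right_injective Fintype.one_lt_card (Module.card_eq_pow_finrank.symm.trans h)

end Frobenius

theorem stmt_2_general {R A : Type*} [CommSemiring R] [CommRing A] [Algebra R A]
    {σ : A →ₐ[R] A} (hσ : orderOf σ = 2) {α β : A} (hα : IsLeftRegular α)
    (hα' : σ α + α = 0) (hβ : β * σ β = 1)
    (M : A → A) (hM : ∀ x, M x = α * β * σ x + α * x) :
    (∀ x y, M (x + y) = M x + M y) ∧ (∀ (c : R) (x : A), M (c • x) = c • M x) ∧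
      (∃ x, M x ≠ 0) ∧ (∀ x, M (M x) = 0) := by
  obtain ⟨hσ_sq, hσ_ne⟩ := orderOf_eq_prime_iff.mp hσ
  have hσ_inv : Function.Involutive σ := fun x => by
    simpa [sq] using DFunLike.congr_fun hσ_sq x
  obtain rfl : M = twistedMap σ α β := funext hM
  exact ⟨map_add _, map_smul _, DFunLike.ne_iff.mp (twistedMap_ne_zero hσ_ne hα),
    twistedMap_twistedMap_apply hσ_inv hα' hβ⟩

/-- Let `n = 2m`, and let `α, β` be nonzero elements of `F_{q^n}` with
`α^{q^m} + α = 0` and `β^{q^m+1} = 1`.  Then `M x = αβ x^{q^m} + α x` is `F_q`-linear,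
not the zero map, and satisfies `M (M x) = 0` for all `x`. -/
theorem stmt_2 {Fq K : Type*} [Field Fq] [Field K] [Algebra Fq K]
    [Fintype Fq] [Fintype K] (q n m : ℕ)
    (hq : Fintype.card Fq = q) (hcard : Fintype.card K = q ^ n) (hn : 1 < n)
    (hm : 0 < m) (hnm : n = 2 * m)
    (α β : K) (hα : α ≠ 0) (hβ : β ≠ 0)
    (hα' : α ^ q ^ m + α = 0) (hβ' : β ^ (q ^ m + 1) = 1)
    (M : K → K) (hM : ∀ x, M x = α * β * x ^ q ^ m + α * x) :
    (∀ x y, M (x + y) = M x + M y) ∧ (∀ (c : Fq) (x : K), M (c • x) = c • M x) ∧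
      (∃ x, M x ≠ 0) ∧ (∀ x, M (M x) = 0) := by
  subst hq hnm
  simp only [pow_succ', ← frobeniusAlgHom_pow_apply Fq m] at hα' hβ' hM
  exact stmt_2_general (orderOf_frobeniusAlgHom_pow Fq (finrank_eq_of_card_eq_pow Fq hcard))
    (IsRegular.of_ne_zero hα).left hα' hβ' M hM
end

section
/- Suppose the polynomial g(x) ∈ F_q[x] satisfies g(x + a) = g(x) as polynomials in F_{q^n}[x] for every a ∈ F_{q^n} (i.e., the composition of g with x + a equals g for all a ∈ F_{q^n}). Then there exists a polynomial R(x) ∈ F_q[x] such that g(x) = R(x^{q^n} − x), i.e., g equals the composition of R with the polynomial x^{q^n} − x. -/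
/-!
Let `V` be a finite additive group of translations and `P = ∏ v ∈ V, (X - v)`; reindexing the
product shows that `P` is itself `V`-invariant. If `g` is `V`-invariant, then `g` takes the value
`g(0)` on all of `V`, so `g = g(0) + P * Q`, and cancelling the monic `P` shows that `Q` is again
`V`-invariant, of smaller degree than `g`. Iterating yields an expansion of `g` in powers of `P`
with constant coefficients. Since division by a monic polynomial does not leave the ring of
coefficients, the expansion is defined over any subring containing the coefficients of `P` and `g`.
For `V = F_{q^n}`, the polynomial `P` is `X ^ q ^ n - X`.
-/

open Polynomial

section CommSemiring

variable {A : Type*} [CommSemiring A]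

theorem eval_eq_coeff_zero_of_comp_X_add_C_eq_self {p : A[X]} {a : A}
    (hp : p.comp (X + C a) = p) : p.eval a = p.coeff 0 :=
  calc p.eval a = (p.comp (X + C a)).eval 0 := by simp [eval_comp]
    _ = p.coeff 0 := by rw [hp, coeff_zero_eq_eval_zero]

theorem exists_eq_comp_of_forall_exists_eq_C_add_mul {P : A[X]} (hP : P.Monic)
    (hdeg : 0 < P.natDegree) {S : Set A[X]}
    (hS : ∀ g ∈ S, ∃ c : A, ∃ Q ∈ S, g = C c + P * Q) {g : A[X]} (hg : g ∈ S) :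
    ∃ R : A[X], g = R.comp P := by
  induction hd : g.natDegree using Nat.strong_induction_on generalizing g with
  | _ d ih =>
    obtain ⟨c, Q, hQS, rfl⟩ := hS g hg
    rcases eq_or_ne Q 0 with rfl | hQ
    · exact ⟨C c, by simp⟩
    · have hQ_lt : Q.natDegree < d := by
        rw [← hd, natDegree_C_add, hP.natDegree_mul' hQ]
        lia
      obtain ⟨R, hR⟩ := ih _ hQ_lt hQS rfl
      exact ⟨C c + X * R, by simp [← hR]⟩

end CommSemiring

theorem prod_X_sub_C_dvd_of_injective {K ι : Type*} [CommRing K] [IsDomain K] [Fintype ι]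
    {f : ι → K} (hf : Function.Injective f) {p : K[X]} (hp : ∀ i, p.eval (f i) = 0) :
    ∏ i, (X - C (f i)) ∣ p := by
  rcases eq_or_ne p 0 with rfl | hp0
  · exact dvd_zero _
  · have hroots : Finset.univ.val.map f ≤ p.roots := by
      rw [Multiset.le_iff_subset (Finset.univ.nodup.map hf)]
      intro a ha
      obtain ⟨i, -, rfl⟩ := Multiset.mem_map.1 ha
      exact (mem_roots hp0).2 (hp i)
    simpa [Multiset.map_map] using (Multiset.prod_X_sub_C_dvd_iff_le_roots hp0 _).2 hroots

/-- The monic polynomial `∏ v ∈ V, (X - v)` with a simple root at each element of a finite additive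
subgroup `V`; every polynomial invariant under translation by `V` is a polynomial in it. It has the
junk value `1` when `V` is infinite. -/
noncomputable def vanishingPolynomial {K : Type*} [CommRing K] (V : AddSubgroup K) : K[X] :=
  ∏ᶠ v : V, (X - C (v : K))

section vanishingPolynomial

variable {K : Type*} [CommRing K] (V : AddSubgroup K)

theorem vanishingPolynomial_eq_prod [Fintype V] :
    vanishingPolynomial V = ∏ v : V, (X - C (v : K)) :=
  finprod_eq_prod_of_fintype _

theorem monic_vanishingPolynomial : (vanishingPolynomial V).Monic :=
  monic_finprod_X_sub_C _

theorem natDegree_vanishingPolynomial [Nontrivial K] [Finite V] :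
    (vanishingPolynomial V).natDegree = Nat.card V := by
  have := Fintype.ofFinite V
  simp [vanishingPolynomial_eq_prod, natDegree_prod_of_monic, monic_X_sub_C]

theorem vanishingPolynomial_comp_X_add_C [Finite V] {a : K} (ha : a ∈ V) :
    (vanishingPolynomial V).comp (X + C a) = vanishingPolynomial V := by
  have := Fintype.ofFinite V
  rw [vanishingPolynomial_eq_prod]
  calc (∏ v : V, (X - C (v : K))).comp (X + C a)
      = ∏ v : V, (X - C ((v - ⟨a, ha⟩ : V) : K)) := by
        rw [prod_comp]
        refine Finset.prod_congr rfl fun v _ => ?_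
        simp only [sub_comp, X_comp, C_comp, AddSubgroup.coe_sub, C_sub]
        ring
    _ = ∏ v : V, (X - C (v : K)) :=
        (Equiv.subRight (⟨a, ha⟩ : V)).prod_comp fun v : V => X - C (v : K)

theorem vanishingPolynomial_dvd_sub_C_coeff_zero [IsDomain K] [Finite V] {p : K[X]}
    (hp : ∀ a ∈ V, p.comp (X + C a) = p) : vanishingPolynomial V ∣ p - C (p.coeff 0) := by
  have := Fintype.ofFinite V
  rw [vanishingPolynomial_eq_prod]
  refine prod_X_sub_C_dvd_of_injective Subtype.val_injective fun v => ?_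
  rw [eval_sub, eval_C, eval_eq_coeff_zero_of_comp_X_add_C_eq_self (hp v v.2), sub_self]

end vanishingPolynomial

theorem vanishingPolynomial_top {K : Type*} [Field K] [Fintype K] :
    vanishingPolynomial (⊤ : AddSubgroup K) = X ^ Fintype.card K - X := by
  have hmonic : (X ^ Fintype.card K - X : K[X]).Monic :=
    monic_X_pow_sub (by simpa using Fintype.one_lt_card (α := K))
  have hroots : (X ^ Fintype.card K - X : K[X]).roots = Finset.univ.val :=
    FiniteField.roots_X_pow_card_sub_X K
  have hcard : (X ^ Fintype.card K - X : K[X]).roots.card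
      = (X ^ Fintype.card K - X : K[X]).natDegree := by
    rw [hroots, FiniteField.X_pow_card_sub_X_natDegree_eq K Fintype.one_lt_card, Finset.card_val,
      Finset.card_univ]
  calc vanishingPolynomial (⊤ : AddSubgroup K) = ∏ᶠ a : K, (X - C a) :=
        finprod_comp_equiv AddSubgroup.topEquiv.toEquiv (f := fun a : K => X - C a)
    _ = ∏ a : K, (X - C a) := finprod_eq_prod_of_fintype _
    _ = X ^ Fintype.card K - X := by
        rw [← prod_multiset_X_sub_C_of_monic_of_roots_card_eq hmonic hcard, hroots,
          Finset.prod_map_val]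

section Descent

variable {A K : Type*} [CommRing A] [CommRing K] [IsDomain K] [Algebra A K] [FaithfulSMul A K]
  (V : AddSubgroup K) [Finite V] {P g : A[X]}

theorem exists_eq_C_add_mul_of_comp_X_add_C_eq_self
    (hP : P.map (algebraMap A K) = vanishingPolynomial V)
    (hg : ∀ a ∈ V, (g.map (algebraMap A K)).comp (X + C a) = g.map (algebraMap A K)) :
    ∃ c : A, ∃ Q : A[X], (∀ a ∈ V, (Q.map (algebraMap A K)).comp (X + C a)
      = Q.map (algebraMap A K)) ∧ g = C c + P * Q := by
  have hinj := FaithfulSMul.algebraMap_injective A K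
  have hP_monic : P.Monic := monic_of_injective hinj (hP ▸ monic_vanishingPolynomial V)
  have hdvd : P ∣ g - C (g.coeff 0) := by
    rw [← map_dvd_map _ hinj hP_monic, hP]
    simpa using vanishingPolynomial_dvd_sub_C_coeff_zero V hg
  obtain ⟨Q, hQ⟩ := hdvd
  have hgQ : g = C (g.coeff 0) + P * Q := by rw [← hQ, add_sub_cancel]
  refine ⟨g.coeff 0, Q, fun a ha => ?_, hgQ⟩
  have hmul : vanishingPolynomial V * (Q.map (algebraMap A K)).comp (X + C a)
      = vanishingPolynomial V * Q.map (algebraMap A K) := by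
    have hga := hg a ha
    rw [hgQ, Polynomial.map_add, Polynomial.map_mul, map_C, hP, add_comp, mul_comp, C_comp,
      vanishingPolynomial_comp_X_add_C V ha] at hga
    exact add_left_cancel hga
  exact mul_left_cancel₀ (monic_vanishingPolynomial V).ne_zero hmul

theorem stmt_3_general (hP : P.map (algebraMap A K) = vanishingPolynomial V)
    (hg : ∀ a ∈ V, (g.map (algebraMap A K)).comp (X + C a) = g.map (algebraMap A K)) :
    ∃ R : A[X], g = R.comp P := by
  have hinj := FaithfulSMul.algebraMap_injective A K
  have hP_monic : P.Monic := monic_of_injective hinj (hP ▸ monic_vanishingPolynomial V)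
  have hP_deg : 0 < P.natDegree := by
    rw [← natDegree_map_eq_of_injective hinj, hP, natDegree_vanishingPolynomial]
    exact Nat.card_pos
  exact exists_eq_comp_of_forall_exists_eq_C_add_mul hP_monic hP_deg
    (fun _ => exists_eq_C_add_mul_of_comp_X_add_C_eq_self V hP) hg

end Descent

/-- Suppose `g ∈ F_q[x]` satisfies `g(x + a) = g(x)` as polynomials in
`F_{q^n}[x]` for every `a ∈ F_{q^n}`.  Then there exists `R ∈ F_q[x]` such that
`g(x) = R(x^{q^n} - x)`. -/
theorem stmt_3 {Fq K : Type*} [Field Fq] [Field K] [Algebra Fq K]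
    [Fintype Fq] [Fintype K] (q n : ℕ)
    (hq : Fintype.card Fq = q) (hcard : Fintype.card K = q ^ n) (hn : 1 < n)
    (g : Polynomial Fq)
    (hg : ∀ a : K, (g.map (algebraMap Fq K)).comp (Polynomial.X + Polynomial.C a)
        = g.map (algebraMap Fq K)) :
    ∃ R : Polynomial Fq, g = R.comp (Polynomial.X ^ q ^ n - Polynomial.X) :=
  stmt_3_general (⊤ : AddSubgroup K) (by simp [vanishingPolynomial_top, hcard]) fun a _ => hg a
end

section
/- Let p be the characteristic of F_q and suppose n is not divisible by p. Then for every t ≥ 2 there is no t-NLP over F_{q^n} with all coefficients in F_q; that is, for every linearized polynomial L(x) = ∑_{i} a_i x^{q^i} with a_i ∈ F_q, if the t-fold composition of the map induced by L on F_{q^n} is identically zero, then the map induced by L is itself identically zero on F_{q^n}. -/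
/-!
With `φ` the Frobenius `z ↦ z ^ q`, the map induced by `∑ aᵢ x ^ q ^ i` is `f(φ)` for the ordinary
polynomial `f = ∑ aᵢ X ^ i`, and composition of maps becomes multiplication of polynomials.
Since `φ ^ n = 1` and `X ^ n - 1` is separable when `p ∤ n`, the minimal polynomial of `φ` is
squarefree; so it divides `f` as soon as it divides `f ^ t`.
-/

open Polynomial

section Algebra

variable {F A : Type*} [Field F] [Ring A] [Algebra F A] {x : A}

theorem aeval_eq_zero_of_isNilpotent_of_squarefree {f g : F[X]} (hg : Squarefree g)
    (hgx : aeval x g = 0) (hf : IsNilpotent (aeval x f)) : aeval x f = 0 := by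
  obtain ⟨t, ht⟩ := hf
  have minpoly_squarefree : Squarefree (minpoly F x) :=
    hg.squarefree_of_dvd (minpoly.dvd F x hgx)
  have minpoly_dvd_pow : minpoly F x ∣ f ^ t := minpoly.dvd F x (by rw [map_pow, ht])
  exact minpoly.dvd_iff.mp (minpoly_squarefree.isRadical t f minpoly_dvd_pow)

theorem aeval_eq_zero_of_isNilpotent_of_pow_eq_one {f : F[X]} {n : ℕ} (hn : (n : F) ≠ 0)
    (hx : x ^ n = 1) (hf : IsNilpotent (aeval x f)) : aeval x f = 0 :=
  aeval_eq_zero_of_isNilpotent_of_squarefree (X_pow_sub_one_separable_iff.mpr hn).squarefree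
    (by simp [hx]) hf

end Algebra

section Linearized

variable {Fq K : Type*} [Field Fq] [Fintype Fq] [CommRing K] [Algebra Fq K]

variable (Fq K) in
/-- The Frobenius `z ↦ z ^ q` of a commutative `F_q`-algebra, as an element of its ring of
`F_q`-linear endomorphisms, where polynomials over `F_q` can be evaluated at it. -/
noncomputable def frobeniusEnd : Module.End Fq K :=
  (FiniteField.frobeniusAlgHom Fq K).toLinearMap

theorem frobeniusEnd_pow_apply (i : ℕ) (z : K) :
    (frobeniusEnd Fq K ^ i) z = z ^ Fintype.card Fq ^ i := by
  rw [Module.End.pow_apply]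
  exact congrFun (pow_iterate (Fintype.card Fq) i) z

theorem frobeniusEnd_pow_eq_one_iff {n : ℕ} :
    frobeniusEnd Fq K ^ n = 1 ↔ ∀ z : K, z ^ Fintype.card Fq ^ n = z := by
  simp only [LinearMap.ext_iff, frobeniusEnd_pow_apply, Module.End.one_apply]

theorem aeval_frobeniusEnd_sum_monomial_apply (s : Finset ℕ) (a : ℕ → Fq) (z : K) :
    aeval (frobeniusEnd Fq K) (∑ i ∈ s, monomial i (a i)) z =
      ∑ i ∈ s, algebraMap Fq K (a i) * z ^ Fintype.card Fq ^ i := by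
  simp [aeval_monomial, LinearMap.sum_apply, frobeniusEnd_pow_apply, Algebra.smul_def]

theorem stmt_6_general {n : ℕ} (hn : (n : Fq) ≠ 0) (hK : ∀ z : K, z ^ Fintype.card Fq ^ n = z)
    {t : ℕ} {s : Finset ℕ} {a : ℕ → Fq} {M : K → K}
    (hM : ∀ z, M z = ∑ i ∈ s, algebraMap Fq K (a i) * z ^ Fintype.card Fq ^ i)
    (hMt : ∀ z, M^[t] z = 0) (z : K) : M z = 0 := by
  let L : Module.End Fq K := aeval (frobeniusEnd Fq K) (∑ i ∈ s, monomial i (a i))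
  have coe_L : ⇑L = M :=
    funext fun z ↦ (aeval_frobeniusEnd_sum_monomial_apply s a z).trans (hM z).symm
  have L_nilpotent : IsNilpotent L :=
    ⟨t, LinearMap.ext fun z ↦ by rw [Module.End.pow_apply, coe_L, hMt, LinearMap.zero_apply]⟩
  have L_eq_zero : L = 0 :=
    aeval_eq_zero_of_isNilpotent_of_pow_eq_one hn (frobeniusEnd_pow_eq_one_iff.mpr hK) L_nilpotent
  rw [← coe_L, L_eq_zero, LinearMap.zero_apply]

end Linearized

/-- Let `p = char F_q` and suppose `p ∤ n`.  Then for every `t ≥ 2` there is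
no `t`-NLP over `F_{q^n}` with all coefficients in `F_q`: for every linearized polynomial
`L = ∑_i a_i x^{q^i}` with `a_i ∈ F_q`, if the `t`-fold composition of the induced map is
identically zero on `F_{q^n}`, then the induced map is itself identically zero. -/
theorem stmt_6 {Fq K : Type*} [Field Fq] [Field K] [Algebra Fq K]
    [Fintype Fq] [Fintype K] (q n : ℕ)
    (hq : Fintype.card Fq = q) (hcard : Fintype.card K = q ^ n) (hn : 1 < n)
    (p : ℕ) (hp : CharP Fq p) (hpn : ¬ p ∣ n) :
    ∀ t : ℕ, 2 ≤ t → ∀ (k : ℕ) (a : ℕ → Fq) (M : K → K),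
      (∀ z, M z = ∑ i ∈ Finset.range (k + 1), algebraMap Fq K (a i) * z ^ q ^ i) →
      (∀ z : K, M^[t] z = 0) → ∀ z : K, M z = 0 := by
  subst hq
  exact fun t _ k a M hM hMt ↦ stmt_6_general (mt (CharP.cast_eq_zero_iff Fq p n).mp hpn)
    (fun z ↦ hcard ▸ FiniteField.pow_card z) hM hMt
end

section
/- Let t ≥ 2, let M : F_{q^n} → F_{q^n} be an F_q-linear map that is not the zero map and whose t-fold composition M^(t) is the zero map, and let K : F_{q^n} → F_{q^n} be a bijective F_q-linear map that commutes with M (K∘M = M∘K). If K is a complete permutation of F_{q^n}, i.e., both K and x ↦ K(x) + x are bijections of F_{q^n}, then M + K is also a complete permutation of F_{q^n}: both x ↦ M(x) + K(x) and x ↦ M(x) + K(x) + x are bijections. -/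
section NilpotentPerturbation

variable {R V : Type*} [Semiring R] [AddCommGroup V] [Module R V] {M N : Module.End R V}

theorem bijective_add_of_isNilpotent_of_commute (hM : IsNilpotent M) (hcomm : Commute M N)
    (hN : Function.Bijective ⇑N) : Function.Bijective ⇑(M + N) := by
  rw [← Module.End.isUnit_iff] at hN ⊢
  exact hM.isUnit_add_right_of_commute hN hcomm

theorem stmt_9_general (hM : IsNilpotent M) (hcomm : Commute M N)
    (hN : Function.Bijective ⇑N) (hN' : Function.Bijective (fun x : V => N x + x)) :
    Function.Bijective (fun x : V => M x + N x) ∧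
      Function.Bijective (fun x : V => M x + N x + x) := by
  have hcomm' : Commute M (N + 1) := hcomm.add_right (.one_right M)
  have hbij : Function.Bijective ⇑(M + (N + 1)) :=
    bijective_add_of_isNilpotent_of_commute hM hcomm' hN'
  rw [← add_assoc] at hbij
  exact ⟨bijective_add_of_isNilpotent_of_commute hM hcomm hN, hbij⟩

end NilpotentPerturbation

/-- Let `t ≥ 2`, `M` an `F_q`-linear map of `F_{q^n}`, not zero, with
`M^(t) = 0`, and `N` a bijective `F_q`-linear map commuting with `M`.  If `N` is a complete
permutation (both `N` and `x ↦ N x + x` are bijections), then so is `M + N`: both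
`x ↦ M x + N x` and `x ↦ M x + N x + x` are bijections. -/
theorem stmt_9 {Fq K : Type*} [Field Fq] [Field K] [Algebra Fq K]
    [Fintype Fq] [Fintype K] (q n : ℕ)
    (hq : Fintype.card Fq = q) (hcard : Fintype.card K = q ^ n) (hn : 1 < n)
    (t : ℕ) (ht : 2 ≤ t) (M N : Module.End Fq K)
    (hM0 : M ≠ 0) (hMt : M ^ t = 0)
    (hcomm : N * M = M * N)
    (hN : Function.Bijective ⇑N)
    (hN' : Function.Bijective (fun x : K => N x + x)) :
    Function.Bijective (fun x : K => M x + N x) ∧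
      Function.Bijective (fun x : K => M x + N x + x) := by
  exact stmt_9_general ⟨t, hMt⟩ hcomm.symm hN hN'
end

section
/- Let p be the characteristic of F_q, let t ≥ 2, let M : F_{q^n} → F_{q^n} be an F_q-linear map that is not the zero map and whose t-fold composition M^(t) is the zero map, and let K : F_{q^n} → F_{q^n} be a bijective F_q-linear map commuting with M. Let s be the order of K (least positive integer with K^(s) = id) and let e be the least nonnegative integer with p^e ≥ t (i.e., e = ⌈log_p t⌉). Then the order of the bijection M + K divides lcm(s, p^e); equivalently, the lcm(s, p^e)-fold composition of M + K is the identity map on F_{q^n}. -/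
/-!
Since `M` and `N` commute in characteristic `p`, the freshman's dream gives
`(M + N) ^ p ^ e = M ^ p ^ e + N ^ p ^ e`, and the first summand vanishes because `t ≤ p ^ e`.
So `M + N` and `N` have the same power at every multiple of `p ^ e`, in particular at
`lcm s (p ^ e)`, where the power of `N` is `1`.
-/

theorem expChar_moduleEnd (R V : Type*) [CommSemiring R] [AddCommMonoid V] [Module R V]
    [FaithfulSMul R V] (p : ℕ) [ExpChar R p] : ExpChar (Module.End R V) p :=
  have algebraMap_injective : Function.Injective (algebraMap R (Module.End R V)) :=
    fun _ _ hab ↦ FaithfulSMul.eq_of_smul_eq_smul (LinearMap.congr_fun hab)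
  expChar_of_injective_algebraMap algebraMap_injective p

section CommutingNilpotent

variable {R : Type*} [Semiring R] {p : ℕ} [ExpChar R p] {x y : R} {t e : ℕ}

theorem add_pow_expChar_pow_of_commute_of_pow_eq_zero (hcomm : Commute x y) (hx : x ^ t = 0)
    (he : t ≤ p ^ e) : (x + y) ^ p ^ e = y ^ p ^ e := by
  rw [add_pow_expChar_pow_of_commute _ _ hcomm, pow_eq_zero_of_le he hx, zero_add]

theorem add_pow_eq_pow_of_expChar_pow_dvd (hcomm : Commute x y) (hx : x ^ t = 0)
    (he : t ≤ p ^ e) {m : ℕ} (hm : p ^ e ∣ m) : (x + y) ^ m = y ^ m := by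
  obtain ⟨k, rfl⟩ := hm
  rw [pow_mul, pow_mul, add_pow_expChar_pow_of_commute_of_pow_eq_zero hcomm hx he]

theorem stmt_10_general (hcomm : Commute x y) (hx : x ^ t = 0) {s : ℕ} (hy : y ^ s = 1)
    (he : t ≤ p ^ e) : (x + y) ^ Nat.lcm s (p ^ e) = 1 :=
  calc
    (x + y) ^ Nat.lcm s (p ^ e) = y ^ Nat.lcm s (p ^ e) :=
      add_pow_eq_pow_of_expChar_pow_dvd hcomm hx he (Nat.dvd_lcm_right s (p ^ e))
    _ = 1 := orderOf_dvd_iff_pow_eq_one.mp <|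
      (orderOf_dvd_of_pow_eq_one hy).trans (Nat.dvd_lcm_left s (p ^ e))

end CommutingNilpotent

/-- Let `p = char F_q`, `t ≥ 2`, `M` a nonzero `F_q`-linear map of
`F_{q^n}` with `M^(t) = 0`, and `N` a bijective `F_q`-linear map commuting with `M`, of
order `s`.  Let `e` be the least nonnegative integer with `p^e ≥ t`.  Then the order of the
bijection `M + N` divides `lcm(s, p^e)`; equivalently, the `lcm(s, p^e)`-fold composition of
`M + N` is the identity map. -/
theorem stmt_10 {Fq K : Type*} [Field Fq] [Field K] [Algebra Fq K]
    [Fintype Fq] [Fintype K] (q n : ℕ)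
    (hq : Fintype.card Fq = q) (hcard : Fintype.card K = q ^ n) (hn : 1 < n)
    (p : ℕ) (hp : CharP Fq p)
    (t : ℕ) (ht : 2 ≤ t) (M N : Module.End Fq K)
    (hM0 : M ≠ 0) (hMt : M ^ t = 0)
    (hN : Function.Bijective ⇑N) (hcomm : N * M = M * N)
    (s : ℕ) (hs : 0 < s) (hNs : N ^ s = 1)
    (hsmin : ∀ j : ℕ, 0 < j → j < s → N ^ j ≠ 1)
    (e : ℕ) (he : t ≤ p ^ e) (hemin : ∀ e' : ℕ, t ≤ p ^ e' → e ≤ e') :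
    (M + N) ^ Nat.lcm s (p ^ e) = 1 := by
  have : Fact p.Prime := ⟨CharP.char_is_prime Fq p⟩
  have : ExpChar (Module.End Fq K) p := expChar_moduleEnd Fq K p
  exact stmt_10_general hcomm.symm hMt hNs he
end

section
/- Let p be the characteristic of F_q, let M : F_{q^n} → F_{q^n} be an F_q-linear map that is not the zero map and satisfies M(M(x)) = 0 for all x ∈ F_{q^n}, and let γ ∈ F_q be a nonzero element of multiplicative order s. Then the order of the bijection f(x) = M(x) + γx of F_{q^n} equals p·s. -/
/-!
Since `M` commutes with the scalar `γ` and `M² = 0`, the binomial expansion stops after two terms: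
`(M + γ)^k = γ^k + k γ^(k-1) M`. As `M ≠ 0` is nilpotent, `1` and `M` are linearly independent, so
this power is the identity exactly when `γ^k = 1` and `k = 0` in the base ring, that is, when both
`s` and `p` divide `k`. Finally, if `s` is finite and `p` is prime, they are coprime because
Frobenius is injective.
-/

theorem add_pow_of_commute_of_sq_eq_zero {A : Type*} [Semiring A] {a b : A} (hab : Commute a b)
    (hb : b ^ 2 = 0) (k : ℕ) : (a + b) ^ k = a ^ k + k • (a ^ (k - 1) * b) := by
  induction k with
  | zero => simp
  | succ k ih =>
    have raise_exponent : k • (a ^ (k - 1) * b) * a = k • (a ^ k * b) := by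
      rcases k with _ | k
      · simp
      · rw [Nat.add_sub_cancel, smul_mul_assoc, mul_assoc, ← hab.eq, ← mul_assoc, ← pow_succ]
    have square_vanishes : k • (a ^ (k - 1) * b) * b = 0 := by
      rw [smul_mul_assoc, mul_assoc, ← sq, hb, mul_zero, smul_zero]
    calc (a + b) ^ (k + 1)
        = (a ^ k + k • (a ^ (k - 1) * b)) * (a + b) := by rw [pow_succ, ih]
      _ = a ^ (k + 1) + (k + 1) • (a ^ k * b) := by
        rw [add_mul, mul_add, mul_add, raise_exponent, square_vanishes, ← pow_succ, succ_nsmul]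
        abel

theorem coprime_orderOf_of_charP {R : Type*} [CommRing R] [IsReduced R] {p : ℕ} [Fact p.Prime]
    [CharP R p] {γ : R} (hγ : IsOfFinOrder γ) : p.Coprime (orderOf γ) := by
  have hp : p.Prime := Fact.out
  rw [hp.coprime_iff_not_dvd]
  rintro ⟨t, ht⟩
  have ht0 : 0 < t := Nat.pos_of_mul_pos_left (ht ▸ hγ.orderOf_pos)
  have hγt : γ ^ t = 1 := by
    rw [← ExpChar.pow_prime_pow_mul_eq_one_iff p 1, pow_one, ← ht, pow_orderOf_eq_one]
  have horder_le : p * t ≤ t := ht ▸ orderOf_le_of_pow_eq_one ht0 hγt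
  exact horder_le.not_gt (lt_mul_left ht0 hp.one_lt)

theorem lcm_char_orderOf {R : Type*} [CommRing R] [IsDomain R] (p : ℕ) [CharP R p] (γ : R) :
    p.lcm (orderOf γ) = p * orderOf γ := by
  rcases CharP.char_is_prime_or_zero R p with hp | rfl
  · have : Fact p.Prime := ⟨hp⟩
    by_cases hγ : IsOfFinOrder γ
    · exact (coprime_orderOf_of_charP hγ).lcm_eq_mul
    · simp [orderOf_eq_zero hγ]
  · simp

section TorsionFreeAlgebra

variable {R A : Type*} [CommRing R] [IsDomain R] [Ring A] [Algebra R A] [Module.IsTorsionFree R A]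

theorem algebraMap_add_smul_eq_one_iff_of_sq_eq_zero {N : A} (hN : N ≠ 0) (hN2 : N ^ 2 = 0)
    (a b : R) : algebraMap R A a + b • N = 1 ↔ a = 1 ∧ b = 0 := by
  refine ⟨fun h => ?_, by rintro ⟨rfl, rfl⟩; simp⟩
  have ha : a = 1 := by
    refine smul_left_injective R hN ?_
    calc a • N = (algebraMap R A a + b • N) * N := by
          rw [add_mul, smul_mul_assoc, ← sq, hN2, smul_zero, add_zero, Algebra.smul_def]
      _ = (1 : R) • N := by rw [h, one_mul, one_smul]
  have hbN : b • N = 0 := by simpa [ha] using h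
  exact ⟨ha, (smul_eq_zero_iff_left hN).1 hbN⟩

theorem algebraMap_add_pow_eq_one_iff_of_sq_eq_zero {N : A} (hN : N ≠ 0) (hN2 : N ^ 2 = 0)
    (γ : R) (k : ℕ) : (algebraMap R A γ + N) ^ k = 1 ↔ γ ^ k = 1 ∧ (k : R) = 0 := by
  have expansion : (algebraMap R A γ + N) ^ k =
      algebraMap R A (γ ^ k) + (k * γ ^ (k - 1) : R) • N := by
    rw [add_pow_of_commute_of_sq_eq_zero (Algebra.commute_algebraMap_left γ N) hN2, ← map_pow,
      ← map_pow, ← Algebra.smul_def, mul_smul, Nat.cast_smul_eq_nsmul]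
  rw [expansion, algebraMap_add_smul_eq_one_iff_of_sq_eq_zero hN hN2]
  refine and_congr_right fun hγ => ?_
  rcases k with _ | k
  · simp
  · have hγ0 : γ ≠ 0 := (IsUnit.of_pow_eq_one hγ k.succ_ne_zero).ne_zero
    rw [mul_eq_zero, or_iff_left (pow_ne_zero _ hγ0)]

theorem orderOf_algebraMap_add_of_sq_eq_zero (p : ℕ) [CharP R p] {N : A} (hN : N ≠ 0)
    (hN2 : N ^ 2 = 0) (γ : R) : orderOf (algebraMap R A γ + N) = p * orderOf γ := by
  rw [← lcm_char_orderOf]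
  refine Nat.dvd_right_iff_eq.1 fun k => ?_
  rw [orderOf_dvd_iff_pow_eq_one, algebraMap_add_pow_eq_one_iff_of_sq_eq_zero hN hN2,
    CharP.cast_eq_zero_iff R p, ← orderOf_dvd_iff_pow_eq_one, Nat.lcm_dvd_iff, and_comm]

end TorsionFreeAlgebra

theorem stmt_14_general {R V : Type*} [CommRing R] [IsDomain R] [AddCommGroup V] [Module R V]
    [Module.IsTorsionFree R V] (p : ℕ) [CharP R p] {M : Module.End R V} (hM0 : M ≠ 0)
    (hM2 : ∀ x, M (M x) = 0) (γ : R) {f : V → V} (hf : ∀ x, f x = M x + γ • x) (j : ℕ) :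
    (∀ x, f^[j] x = x) ↔ p * orderOf γ ∣ j := by
  have hMsq : M ^ 2 = 0 := by
    rw [sq]
    exact LinearMap.ext hM2
  have hfM : f = (algebraMap R (Module.End R V) γ + M : Module.End R V) := by
    funext x
    rw [hf, LinearMap.add_apply, Module.algebraMap_end_apply, add_comm]
  rw [← orderOf_algebraMap_add_of_sq_eq_zero p hM0 hMsq, orderOf_dvd_iff_pow_eq_one,
    LinearMap.ext_iff]
  simp only [Module.End.pow_apply, Module.End.one_apply, hfM]

/-- Let `p = char F_q`, `M` a nonzero `F_q`-linear map of `F_{q^n}` with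
`M (M x) = 0` for all `x`, and `γ ∈ F_q*` of multiplicative order `s`.  Then the order of
the bijection `f x = M x + γ x` equals `p·s`. -/
theorem stmt_14 {Fq K : Type*} [Field Fq] [Field K] [Algebra Fq K]
    [Fintype Fq] [Fintype K] (q n : ℕ)
    (hq : Fintype.card Fq = q) (hcard : Fintype.card K = q ^ n) (hn : 1 < n)
    (p : ℕ) (hp : CharP Fq p)
    (M : Module.End Fq K) (hM0 : M ≠ 0) (hM2 : ∀ x : K, M (M x) = 0)
    (γ : Fq) (hγ : γ ≠ 0)
    (s : ℕ) (hs : 0 < s) (hγs : γ ^ s = 1)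
    (hsmin : ∀ j : ℕ, 0 < j → j < s → γ ^ j ≠ 1)
    (f : K → K) (hf : ∀ x, f x = M x + algebraMap Fq K γ * x) :
    (∀ x : K, f^[p * s] x = x) ∧
      ∀ j : ℕ, 0 < j → (∀ x : K, f^[j] x = x) → p * s ≤ j := by
  have iterate_iff := stmt_14_general p hM0 hM2 γ (f := f) fun x => by rw [hf, Algebra.smul_def]
  rw [(orderOf_eq_iff hs).2 ⟨hγs, fun j hjs hj => hsmin j hj hjs⟩] at iterate_iff
  exact ⟨(iterate_iff _).2 dvd_rfl, fun j hj h => Nat.le_of_dvd hj ((iterate_iff j).1 h)⟩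
end

section
/- Let t ≥ 2, let p be the characteristic of F_q, and write n = p^s·u with gcd(u, p) = 1 and s ≥ 1. Let r(x) ∈ F_q[x] be any nonzero polynomial of degree at most v = n − 1 − u·⌈p^s/t⌉, set l(x) = r(x)·(x^u − 1)^{⌈p^s/t⌉}, and let L_r : F_{q^n} → F_{q^n} be the map induced by the linearized q-associate of l. Let α, β be nonzero elements of F_q and let Tr : F_{q^n} → F_q denote the absolute trace Tr(x) = ∑_{i=0}^{n-1} x^{q^i}. Then the map x ↦ L_r(x) + α·Tr(x) + β·x is a bijection of F_{q^n}; moreover, if β ≠ −1 it is a complete permutation, i.e., x ↦ L_r(x) + α·Tr(x) + β·x + x is also a bijection. -/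
/-!
The Frobenius `φ : z ↦ z ^ q` is an `F_q`-linear map with `φ ^ n = 1`, and the map induced by the
linearized `q`-associate of `l` is `l(φ)`. In characteristic `p` the relation
`(φ ^ u - 1) ^ p ^ s = φ ^ n - 1 = 0` makes `φ ^ u - 1` nilpotent, hence also any `l(φ)` with
`x ^ u - 1 ∣ l`. The trace `T = ∑ φ ^ i` satisfies `T ^ 2 = n T = 0` because `p ∣ n`. Everything
commutes, so `l(φ) + α T + β` is a unit plus a nilpotent, hence invertible, as soon as `β ≠ 0`.
-/

open Polynomial

section NilpotentElements

theorem geom_sum_sq_of_pow_eq_one {B : Type*} [Ring B] {x : B} {n : ℕ} (hx : x ^ n = 1) :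
    (∑ i ∈ Finset.range n, x ^ i) ^ 2 = n * ∑ i ∈ Finset.range n, x ^ i := by
  set T := ∑ i ∈ Finset.range n, x ^ i
  have x_mul_T : x * T = T := by
    rw [← sub_eq_zero, ← sub_one_mul, mul_geom_sum, hx, sub_self]
  have pow_mul_T (i : ℕ) : x ^ i * T = T := by
    induction i with
    | zero => rw [pow_zero, one_mul]
    | succ i ih => rw [pow_succ, mul_assoc, x_mul_T, ih]
  calc T ^ 2 = ∑ i ∈ Finset.range n, x ^ i * T := by rw [sq, Finset.sum_mul]
    _ = n * T := by
      simp only [pow_mul_T, Finset.sum_const, Finset.card_range, nsmul_eq_mul]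

variable {R B : Type*} [CommRing R] [Ring B] [Algebra R B] {x : B} {p s u n k : ℕ}

variable (R) in
theorem isNilpotent_pow_sub_one_of_pow_eq_one [ExpChar R p] (hx : x ^ (p ^ s * u) = 1) :
    IsNilpotent (x ^ u - 1) := by
  have pow_X_sub_one : (X ^ u - 1 : R[X]) ^ p ^ s = X ^ (p ^ s * u) - 1 := by
    rw [sub_pow_expChar_pow, one_pow, ← pow_mul, mul_comm]
  refine ⟨p ^ s, ?_⟩
  simpa [hx] using congrArg (aeval x) pow_X_sub_one

theorem isNilpotent_aeval_mul {f : R[X]} (r : R[X]) (hf : IsNilpotent (aeval x f)) :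
    IsNilpotent (aeval x (r * f)) := by
  rw [map_mul]
  exact ((Commute.all r f).map (aeval x)).isNilpotent_mul_left hf

theorem isNilpotent_aeval_add {f g : R[X]} (hf : IsNilpotent (aeval x f))
    (hg : IsNilpotent (aeval x g)) : IsNilpotent (aeval x (f + g)) := by
  rw [map_add]
  exact ((Commute.all f g).map (aeval x)).isNilpotent_add hf hg

theorem isUnit_aeval_add_C {f : R[X]} {c : R} (hf : IsNilpotent (aeval x f)) (hc : IsUnit c) :
    IsUnit (aeval x (f + C c)) := by
  rw [map_add]
  exact hf.isUnit_add_right_of_commute ((isUnit_C.2 hc).map (aeval x))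
    ((Commute.all f (C c)).map (aeval x))

theorem isNilpotent_aeval_mul_X_pow_sub_one_pow [ExpChar R p] (hx : x ^ (p ^ s * u) = 1)
    (hk : k ≠ 0) (r : R[X]) : IsNilpotent (aeval x (r * (X ^ u - 1) ^ k)) := by
  refine isNilpotent_aeval_mul r ?_
  simpa using (isNilpotent_pow_sub_one_of_pow_eq_one R hx).pow_of_pos hk

theorem isNilpotent_aeval_C_mul_geom_sum (hx : x ^ n = 1) (hn : (n : R) = 0) (a : R) :
    IsNilpotent (aeval x (C a * ∑ i ∈ Finset.range n, X ^ i)) := by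
  have natCast_eq_zero : (n : B) = 0 := by rw [← map_natCast (algebraMap R B), hn, map_zero]
  refine isNilpotent_aeval_mul (C a) ⟨2, ?_⟩
  simp only [map_sum, map_pow, aeval_X]
  rw [geom_sum_sq_of_pow_eq_one hx, natCast_eq_zero, zero_mul]

end NilpotentElements

section LinearizedAssociate

variable (F A : Type*) [Field F] [Fintype F] [CommRing A] [Algebra F A]

/-- The `F`-linear map `z ↦ ∑ aᵢ z ^ q ^ i` on `A` induced by the linearized `q`-associate of
`l = ∑ aᵢ X ^ i`, where `q` is the cardinality of `F`. It is encoded as the value of `l` at the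
Frobenius endomorphism, so that products of polynomials become compositions of maps. -/
noncomputable def linearizedAssociate : F[X] →ₐ[F] Module.End F A :=
  aeval (FiniteField.frobeniusAlgHom F A).toLinearMap

variable {F A}

theorem toLinearMap_frobeniusAlgHom_pow_apply (i : ℕ) (z : A) :
    ((FiniteField.frobeniusAlgHom F A).toLinearMap ^ i) z = z ^ Fintype.card F ^ i := by
  rw [Module.End.pow_apply]
  simp [FiniteField.coe_frobeniusAlgHom, pow_iterate]

theorem linearizedAssociate_apply (l : F[X]) (z : A) :
    linearizedAssociate F A l z =
      ∑ i ∈ Finset.range (l.natDegree + 1),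
        algebraMap F A (l.coeff i) * z ^ Fintype.card F ^ i := by
  simp only [linearizedAssociate, aeval_eq_sum_range, LinearMap.sum_apply, LinearMap.smul_apply,
    toLinearMap_frobeniusAlgHom_pow_apply]
  exact Finset.sum_congr rfl fun i _ ↦ Algebra.smul_def _ _

theorem linearizedAssociate_C_apply (c : F) (z : A) :
    linearizedAssociate F A (C c) z = algebraMap F A c * z := by
  rw [linearizedAssociate, aeval_C, Module.algebraMap_end_apply, Algebra.smul_def]

theorem linearizedAssociate_C_mul_geom_sum_apply (a : F) (n : ℕ) (z : A) :
    linearizedAssociate F A (C a * ∑ i ∈ Finset.range n, X ^ i) z =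
      algebraMap F A a * ∑ i ∈ Finset.range n, z ^ Fintype.card F ^ i := by
  rw [map_mul, Module.End.mul_apply, linearizedAssociate_C_apply]
  simp only [linearizedAssociate, map_sum, map_pow, aeval_X, LinearMap.sum_apply,
    toLinearMap_frobeniusAlgHom_pow_apply]

theorem bijective_linearizedAssociate_add_geom_sum_add_C {p s u n k : ℕ} [CharP F p]
    (hA : ∀ z : A, z ^ Fintype.card F ^ n = z) (hs : s ≠ 0) (hn : n = p ^ s * u) (hk : k ≠ 0)
    (r : F[X]) (α : F) {γ : F} (hγ : γ ≠ 0) :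
    Function.Bijective (linearizedAssociate F A
      (r * (X ^ u - 1) ^ k + C α * ∑ i ∈ Finset.range n, X ^ i + C γ)) := by
  have frobenius_pow : (FiniteField.frobeniusAlgHom F A).toLinearMap ^ n = 1 :=
    LinearMap.ext fun z ↦ (toLinearMap_frobeniusAlgHom_pow_apply n z).trans (hA z)
  have natCast_n : (n : F) = 0 := by
    rw [CharP.cast_eq_zero_iff F p, hn]
    exact (dvd_pow_self p hs).mul_right u
  have : Fact p.Prime := ⟨CharP.char_is_prime F p⟩
  exact (Module.End.isUnit_iff _).1 <| isUnit_aeval_add_C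
    (isNilpotent_aeval_add (isNilpotent_aeval_mul_X_pow_sub_one_pow (hn ▸ frobenius_pow) hk r)
      (isNilpotent_aeval_C_mul_geom_sum frobenius_pow natCast_n α)) hγ.isUnit

end LinearizedAssociate

theorem stmt_15_general {F A : Type*} [Field F] [Fintype F] [CommRing A] [Algebra F A]
    {q n p s u k : ℕ} (hq : Fintype.card F = q) (hA : ∀ z : A, z ^ q ^ n = z) [CharP F p]
    (hs : s ≠ 0) (hn : n = p ^ s * u) (hk : k ≠ 0) {r l : F[X]} (hl : l = r * (X ^ u - 1) ^ k)
    {L : A → A}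
    (hL : ∀ z, L z = ∑ i ∈ Finset.range (l.natDegree + 1),
      algebraMap F A (l.coeff i) * z ^ q ^ i)
    {α β : F} (hβ : β ≠ 0) {f : A → A}
    (hf : ∀ z, f z = L z + algebraMap F A α * (∑ i ∈ Finset.range n, z ^ q ^ i)
      + algebraMap F A β * z) :
    Function.Bijective f ∧ (β ≠ -1 → Function.Bijective (fun z ↦ f z + z)) := by
  subst hq
  let P (γ : F) : F[X] := l + C α * ∑ i ∈ Finset.range n, X ^ i + C γ
  have bijective_P {γ : F} (hγ : γ ≠ 0) : Function.Bijective (linearizedAssociate F A (P γ)) := by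
    simpa only [P, hl] using bijective_linearizedAssociate_add_geom_sum_add_C hA hs hn hk r α hγ
  have f_eq : f = linearizedAssociate F A (P β) := by
    funext z
    simp only [P, map_add, LinearMap.add_apply, linearizedAssociate_C_mul_geom_sum_apply,
      linearizedAssociate_C_apply, linearizedAssociate_apply l, hf, hL]
  have f_add_eq : (fun z ↦ f z + z) = linearizedAssociate F A (P (β + 1)) := by
    funext z
    simp only [f_eq, P, map_add, LinearMap.add_apply, map_one, Module.End.one_apply, add_assoc]
  exact ⟨f_eq ▸ bijective_P hβ,
    fun hβ' ↦ f_add_eq ▸ bijective_P fun h ↦ hβ' (eq_neg_of_add_eq_zero_left h)⟩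

/-- Let `t ≥ 2`, `p = char F_q`, `n = p^s u` with `gcd(u, p) = 1`, `s ≥ 1`.
Let `r ∈ F_q[x]` be nonzero of degree at most `v = n - 1 - u⌈p^s/t⌉`, set
`l = r (x^u - 1)^{⌈p^s/t⌉}`, and let `L_r` be the map induced by the linearized
`q`-associate of `l`.  Let `α, β ∈ F_q*` and `Tr` be the absolute trace.  Then
`x ↦ L_r x + α Tr x + β x` is a bijection of `F_{q^n}`, and if `β ≠ -1` it is a complete
permutation. -/
theorem stmt_15 {Fq K : Type*} [Field Fq] [Field K] [Algebra Fq K]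
    [Fintype Fq] [Fintype K] (q n : ℕ)
    (hq : Fintype.card Fq = q) (hcard : Fintype.card K = q ^ n) (hn : 1 < n)
    (t p s u : ℕ) (ht : 2 ≤ t) (hp : CharP Fq p) (hs : 1 ≤ s)
    (hu : Nat.Coprime u p) (hnsu : n = p ^ s * u)
    (r : Polynomial Fq) (hr : r ≠ 0)
    (hdeg : r.natDegree ≤ n - 1 - u * ((p ^ s + t - 1) / t))
    (l : Polynomial Fq)
    (hl : l = r * (Polynomial.X ^ u - 1) ^ ((p ^ s + t - 1) / t))
    (L : K → K)
    (hL : ∀ z, L z = ∑ i ∈ Finset.range (l.natDegree + 1),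
        algebraMap Fq K (l.coeff i) * z ^ q ^ i)
    (α β : Fq) (hα : α ≠ 0) (hβ : β ≠ 0)
    (f : K → K)
    (hf : ∀ z, f z = L z + algebraMap Fq K α * (∑ i ∈ Finset.range n, z ^ q ^ i)
        + algebraMap Fq K β * z) :
    Function.Bijective f ∧ (β ≠ -1 → Function.Bijective (fun z => f z + z)) := by
  have p_pow_pos : 0 < p ^ s := pow_pos (CharP.char_is_prime Fq p).pos s
  exact stmt_15_general hq (fun z ↦ hcard ▸ FiniteField.pow_card z) (by omega) hnsu
    (Nat.div_pos (by omega) (by omega)).ne' hl hL hβ hf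
end

section
/- Let p be the characteristic of F_q, let M : F_{q^n} → F_{q^n} be an F_q-linear map that is not the zero map and satisfies M(M(x)) = 0 for all x ∈ F_{q^n}, and let K : F_{q^n} → F_{q^n} be a bijective F_q-linear map commuting with M. For a ∈ F_{q^n}, let m_a be the least positive integer d with K^(d)(a) = a, and let m_a' be the least positive integer d with (M+K)^(d)(a) = a. Then m_a' divides lcm(m_a, p), and if M(a) = 0, then m_a' = m_a. -/
/-!
Since `M` squares to zero and commutes with `N`, the binomial expansion of `(M + N) ^ n` stops after
two terms: `(M + N)^[n] a = N^[n] a + n • N^[n - 1] (M a)`. The second term vanishes when the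
additive order of `M a` divides `n`, in particular when the characteristic does, and for every `n`
when `M a = 0`.
-/

open Function hiding Commute

theorem eq_minimalPeriod_of_iterate_ne {α : Type*} {f : α → α} {x : α} {m : ℕ} (hm : 0 < m)
    (hfix : f^[m] x = x) (hmin : ∀ j, 0 < j → j < m → f^[j] x ≠ x) : m = minimalPeriod f x := by
  have hper : IsPeriodicPt f m x := hfix
  refine (hper.minimalPeriod_le hm).antisymm' (not_lt.1 fun hlt ↦ ?_)
  exact hmin _ (hper.minimalPeriod_pos hm) hlt (isPeriodicPt_minimalPeriod f x)

theorem addOrderOf_dvd_of_charP (R : Type*) {V : Type*} [Semiring R] [AddCommMonoid V] [Module R V]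
    (p : ℕ) [CharP R p] (x : V) : addOrderOf x ∣ p :=
  addOrderOf_dvd_of_nsmul_eq_zero <| by
    rw [← Nat.cast_smul_eq_nsmul R, CharP.cast_eq_zero, zero_smul]

section

variable {R V : Type*} [Semiring R] [AddCommMonoid V] [Module R V] {M N : Module.End R V} {a : V}

theorem apply_iterate_of_commute (hcomm : Commute M N) (n : ℕ) (x : V) :
    M (N^[n] x) = N^[n] (M x) := by
  have hfun : Function.Commute M N := LinearMap.congr_fun hcomm.eq
  exact hfun.iterate_right n x

theorem iterate_succ_add_apply_of_sq_apply_eq_zero (hcomm : Commute M N) (hM : M (M a) = 0)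
    (n : ℕ) : (M + N)^[n + 1] a = N^[n + 1] a + (n + 1) • N^[n] (M a) := by
  induction n with
  | zero => simp [add_comm]
  | succ n ih =>
    have hkill : M (N^[n] (M a)) = 0 := by
      rw [apply_iterate_of_commute hcomm, hM, iterate_map_zero]
    calc (M + N)^[n + 2] a
        = (M + N) (N^[n + 1] a + (n + 1) • N^[n] (M a)) := by rw [iterate_succ_apply', ih]
      _ = N^[n + 1] (M a) + (N^[n + 2] a + (n + 1) • N^[n + 1] (M a)) := by
        rw [LinearMap.add_apply, map_add, map_nsmul, hkill, smul_zero, add_zero,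
          apply_iterate_of_commute hcomm, map_add, map_nsmul, ← iterate_succ_apply' N,
          ← iterate_succ_apply' N]
      _ = N^[n + 2] a + (n + 2) • N^[n + 1] (M a) := by
        rw [succ_nsmul _ (n + 1)]; abel

theorem iterate_add_apply_of_apply_eq_zero (hcomm : Commute M N) (ha : M a = 0) (n : ℕ) :
    (M + N)^[n] a = N^[n] a := by
  cases n with
  | zero => rfl
  | succ n =>
    rw [iterate_succ_add_apply_of_sq_apply_eq_zero hcomm (by rw [ha, map_zero]), ha,
      iterate_map_zero, smul_zero, add_zero]

theorem isPeriodicPt_add_of_addOrderOf_dvd (hcomm : Commute M N) (hM : M (M a) = 0) {n : ℕ}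
    (hper : IsPeriodicPt N n a) (hdvd : addOrderOf (M a) ∣ n) : IsPeriodicPt (M + N) n a := by
  cases n with
  | zero => exact isPeriodicPt_zero _ _
  | succ n =>
    have hsmul : (n + 1) • N^[n] (M a) = 0 := by
      rw [← iterate_map_nsmul, addOrderOf_dvd_iff_nsmul_eq_zero.1 hdvd, iterate_map_zero]
    calc (M + N)^[n + 1] a
        = N^[n + 1] a + (n + 1) • N^[n] (M a) :=
          iterate_succ_add_apply_of_sq_apply_eq_zero hcomm hM n
      _ = a := by rw [hper, hsmul, add_zero]

theorem minimalPeriod_add_dvd_lcm_addOrderOf (hcomm : Commute M N) (hM : M (M a) = 0) :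
    minimalPeriod (M + N) a ∣ Nat.lcm (minimalPeriod N a) (addOrderOf (M a)) :=
  (isPeriodicPt_add_of_addOrderOf_dvd hcomm hM
    ((isPeriodicPt_minimalPeriod N a).trans_dvd (Nat.dvd_lcm_left _ _))
    (Nat.dvd_lcm_right _ _)).minimalPeriod_dvd

theorem minimalPeriod_add_eq_of_apply_eq_zero (hcomm : Commute M N) (ha : M a = 0) :
    minimalPeriod (M + N) a = minimalPeriod N a :=
  minimalPeriod_eq_minimalPeriod_iff.2 fun n ↦ by
    rw [IsPeriodicPt, IsFixedPt, iterate_add_apply_of_apply_eq_zero hcomm ha, IsPeriodicPt,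
      IsFixedPt]

end

theorem stmt_16_general {R V : Type*} [Semiring R] [AddCommMonoid V] [Module R V]
    {M N : Module.End R V} {a : V} (hcomm : Commute M N) (hM : M (M a) = 0) :
    minimalPeriod (M + N) a ∣ Nat.lcm (minimalPeriod N a) (addOrderOf (M a)) ∧
      (M a = 0 → minimalPeriod (M + N) a = minimalPeriod N a) :=
  ⟨minimalPeriod_add_dvd_lcm_addOrderOf hcomm hM, minimalPeriod_add_eq_of_apply_eq_zero hcomm⟩

/-- Let `p = char F_q`, `M` a nonzero `F_q`-linear map of `F_{q^n}` with
`M (M x) = 0` for all `x`, and `N` a bijective `F_q`-linear map commuting with `M`.  For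
`a ∈ F_{q^n}`, let `m_a` be the least positive `d` with `N^(d)(a) = a` and `m_a'` the least
positive `d` with `(M+N)^(d)(a) = a`.  Then `m_a' ∣ lcm(m_a, p)`, and if `M a = 0` then
`m_a' = m_a`. -/
theorem stmt_16 {Fq K : Type*} [Field Fq] [Field K] [Algebra Fq K]
    [Fintype Fq] [Fintype K] (q n : ℕ)
    (hq : Fintype.card Fq = q) (hcard : Fintype.card K = q ^ n) (hn : 1 < n)
    (p : ℕ) (hp : CharP Fq p)
    (M N : Module.End Fq K)
    (hM0 : M ≠ 0) (hM2 : ∀ x : K, M (M x) = 0)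
    (hN : Function.Bijective ⇑N) (hcomm : N * M = M * N)
    (a : K) (ma ma' : ℕ)
    (hma : 0 < ma) (hmaFix : (⇑N)^[ma] a = a)
    (hmaMin : ∀ j : ℕ, 0 < j → j < ma → (⇑N)^[j] a ≠ a)
    (hma' : 0 < ma') (hmaFix' : (fun x : K => M x + N x)^[ma'] a = a)
    (hmaMin' : ∀ j : ℕ, 0 < j → j < ma' → (fun x : K => M x + N x)^[j] a ≠ a) :
    ma' ∣ Nat.lcm ma p ∧ (M a = 0 → ma' = ma) := by
  obtain rfl := eq_minimalPeriod_of_iterate_ne hma hmaFix hmaMin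
  obtain rfl := eq_minimalPeriod_of_iterate_ne hma' hmaFix' hmaMin'
  exact (stmt_16_general hcomm.symm (hM2 a)).imp_left
    (·.trans (lcm_dvd_lcm dvd_rfl (addOrderOf_dvd_of_charP Fq p (M a))))
end

section
/- Let p be the characteristic of F_q, let M : F_{q^n} → F_{q^n} be an F_q-linear map that is not the zero map and satisfies M(M(x)) = 0 for all x ∈ F_{q^n}, and let K : F_{q^n} → F_{q^n} be a bijective F_q-linear map commuting with M whose order s (least positive integer with K^(s) = id) satisfies gcd(s, p) = 1. For a ∈ F_{q^n}, let m_a be the least positive integer d with K^(d)(a) = a, and let m_a' be the least positive integer d with (M+K)^(d)(a) = a. Then m_a' = m_a if M(a) = 0, and m_a' = p·m_a if M(a) ≠ 0. -/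
/-!
Since `N` is invertible and commutes with `M`, the map `M + N` factors as `N ∘ (1 + L)` with
`L = N⁻¹ M`, a multiplicative Jordan decomposition. From `L (L a) = 0` one gets
`(1 + L)^d a = a + d • L a`, so the period of `a` under `1 + L` is the additive order of `L a`,
which is that of `M a`: it is `1` if `M a = 0` and `p` otherwise. The two factors commute and the
periods of `a` under them are coprime, so the period under their composition is the product.
-/

open Function

theorem eq_minimalPeriod_of_forall_lt_ne {α : Type*} {f : α → α} {x : α} {m : ℕ} (hpos : 0 < m)
    (hfix : f^[m] x = x) (hmin : ∀ j, 0 < j → j < m → f^[j] x ≠ x) : m = minimalPeriod f x := by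
  have hper : IsPeriodicPt f m x := hfix
  refine le_antisymm (not_lt.mp fun hlt => ?_) (hper.minimalPeriod_le hpos)
  exact hmin _ (hper.minimalPeriod_pos hpos) hlt iterate_minimalPeriod

theorem addOrderOf_eq_of_charP {R V : Type*} [Ring R] [IsDomain R] [AddCommGroup V] [Module R V]
    [Module.IsTorsionFree R V] (p : ℕ) [CharP R p] {v : V} (hv : v ≠ 0) : addOrderOf v = p := by
  refine Nat.dvd_right_iff_eq.mp fun d => ?_
  rw [addOrderOf_dvd_iff_nsmul_eq_zero, ← Nat.cast_smul_eq_nsmul R, smul_eq_zero_iff_left hv,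
    CharP.cast_eq_zero_iff R p]

section AddCommMonoid

variable {R V : Type*} [Semiring R] [AddCommMonoid V] [Module R V]

theorem minimalPeriod_dvd_of_pow_eq_one {N : Module.End R V} {s : ℕ} (hN : N ^ s = 1) (a : V) :
    minimalPeriod N a ∣ s := by
  refine IsPeriodicPt.minimalPeriod_dvd (?_ : N^[s] a = a)
  rw [← Module.End.pow_apply, hN, Module.End.one_apply]

theorem iterate_one_add_apply {L : Module.End R V} {a : V} (hL : L (L a) = 0) (d : ℕ) :
    (⇑(1 + L))^[d] a = a + d • L a := by
  induction d with
  | zero => simp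
  | succ d ih =>
    rw [iterate_succ_apply', ih, LinearMap.add_apply, Module.End.one_apply, map_add, map_nsmul, hL,
      smul_zero, add_zero, succ_nsmul, add_assoc]

end AddCommMonoid

section AddCommGroup

variable {R V : Type*} [Semiring R] [AddCommGroup V] [Module R V]

theorem minimalPeriod_one_add {L : Module.End R V} {a : V} (hL : L (L a) = 0) :
    minimalPeriod ⇑(1 + L) a = addOrderOf (L a) := by
  refine Nat.dvd_right_iff_eq.mp fun d => ?_
  rw [← isPeriodicPt_iff_minimalPeriod_dvd, addOrderOf_dvd_iff_nsmul_eq_zero, IsPeriodicPt,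
    IsFixedPt, iterate_one_add_apply hL, add_eq_left]

theorem minimalPeriod_add_of_coprime {M N : Module.End R V} {a : V} (hM : M (M a) = 0)
    (hN : IsUnit N) (hcomm : Commute N M)
    (hcop : (minimalPeriod N a).Coprime (addOrderOf (M a))) :
    minimalPeriod ⇑(M + N) a = minimalPeriod N a * addOrderOf (M a) := by
  obtain ⟨u, rfl⟩ := hN
  set L : Module.End R V := ↑u⁻¹ * M with hLdef
  have hfactor : M + ↑u = ↑u * (1 + L) := by
    rw [mul_add, mul_one, hLdef, Units.mul_inv_cancel_left, add_comm]
  have hcommL : Commute (u : Module.End R V) L := (Commute.refl _).units_inv_right.mul_right hcomm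
  have hL : L (L a) = 0 := by
    have hsq : L * L = ↑u⁻¹ * ↑u⁻¹ * (M * M) := hcomm.units_inv_left.symm.mul_mul_mul_comm _ _
    rw [← Module.End.mul_apply, hsq, Module.End.mul_apply, Module.End.mul_apply M M, hM, map_zero]
  have horder : addOrderOf (L a) = addOrderOf (M a) :=
    addOrderOf_injective (↑u⁻¹ : Module.End R V).toAddMonoidHom
      ((Module.End.isUnit_iff _).mp u⁻¹.isUnit).injective (M a)
  rw [← horder, ← minimalPeriod_one_add hL] at hcop ⊢
  have hcommU : Function.Commute ⇑(u : Module.End R V) ⇑(1 + L) :=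
    LinearMap.congr_fun ((Commute.one_right _).add_right hcommL)
  rw [hfactor, Module.End.coe_mul, hcommU.minimalPeriod_of_comp_eq_mul_of_coprime hcop]

end AddCommGroup

/-- `minimalPeriod` is `0` at a non-periodic point, so for `p = 0` the second claim says that `a` is
not periodic under `M + N`. -/
theorem stmt_17_general {R V : Type*} [Ring R] [IsDomain R] [AddCommGroup V] [Module R V]
    [Module.IsTorsionFree R V] (p : ℕ) [CharP R p] {M N : Module.End R V} {a : V}
    (hM : M (M a) = 0) (hN : IsUnit N) (hcomm : Commute N M)
    (hcop : (minimalPeriod N a).Coprime p) :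
    (M a = 0 → minimalPeriod ⇑(M + N) a = minimalPeriod N a) ∧
      (M a ≠ 0 → minimalPeriod ⇑(M + N) a = p * minimalPeriod N a) := by
  refine ⟨fun hMa => ?_, fun hMa => ?_⟩
  · have horder : addOrderOf (M a) = 1 := AddMonoid.addOrderOf_eq_one_iff.mpr hMa
    simpa [horder] using minimalPeriod_add_of_coprime hM hN hcomm
  · have horder : addOrderOf (M a) = p := addOrderOf_eq_of_charP (R := R) p hMa
    rw [minimalPeriod_add_of_coprime hM hN hcomm (horder ▸ hcop), horder, mul_comm]

/-- Let `p = char F_q`, `M` a nonzero `F_q`-linear map of `F_{q^n}` with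
`M (M x) = 0` for all `x`, and `N` a bijective `F_q`-linear map commuting with `M`, whose
order `s` satisfies `gcd(s, p) = 1`.  For `a ∈ F_{q^n}`, with `m_a` (resp. `m_a'`) the least
positive `d` with `N^(d)(a) = a` (resp. `(M+N)^(d)(a) = a`):  `m_a' = m_a` if `M a = 0`, and
`m_a' = p·m_a` if `M a ≠ 0`. -/
theorem stmt_17 {Fq K : Type*} [Field Fq] [Field K] [Algebra Fq K]
    [Fintype Fq] [Fintype K] (q n : ℕ)
    (hq : Fintype.card Fq = q) (hcard : Fintype.card K = q ^ n) (hn : 1 < n)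
    (p : ℕ) (hp : CharP Fq p)
    (M N : Module.End Fq K)
    (hM0 : M ≠ 0) (hM2 : ∀ x : K, M (M x) = 0)
    (hN : Function.Bijective ⇑N) (hcomm : N * M = M * N)
    (s : ℕ) (hs : 0 < s) (hNs : N ^ s = 1)
    (hsmin : ∀ j : ℕ, 0 < j → j < s → N ^ j ≠ 1)
    (hsp : Nat.Coprime s p)
    (a : K) (ma ma' : ℕ)
    (hma : 0 < ma) (hmaFix : (⇑N)^[ma] a = a)
    (hmaMin : ∀ j : ℕ, 0 < j → j < ma → (⇑N)^[j] a ≠ a)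
    (hma' : 0 < ma') (hmaFix' : (fun x : K => M x + N x)^[ma'] a = a)
    (hmaMin' : ∀ j : ℕ, 0 < j → j < ma' → (fun x : K => M x + N x)^[j] a ≠ a) :
    (M a = 0 → ma' = ma) ∧ (M a ≠ 0 → ma' = p * ma) := by
  rw [eq_minimalPeriod_of_forall_lt_ne hma hmaFix hmaMin,
    eq_minimalPeriod_of_forall_lt_ne hma' hmaFix' hmaMin']
  exact stmt_17_general p (hM2 a) ((Module.End.isUnit_iff N).mpr hN) hcomm
    (hsp.coprime_dvd_left (minimalPeriod_dvd_of_pow_eq_one hNs a))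
end

section
/- Suppose F_{q^n} has characteristic 2, and let M : F_{q^n} → F_{q^n} be an F_q-linear map that is not the zero map and satisfies M(M(x)) = 0 for all x ∈ F_{q^n}. Let Z_M = {z ∈ F_{q^n} : M(z) = 0} be the kernel of M and V_M = {M(z) : z ∈ F_{q^n}} its image, and suppose a ∈ Z_M but a ∉ V_M. Then the map f(x) = M(x) + x + a is an involution of F_{q^n} with no fixed points: f(f(z)) = z and f(z) ≠ z for all z ∈ F_{q^n}. Moreover, if the dimension of V_M as an F_q-vector space is less than n/2, then there exists an element b ∈ Z_M with b ∉ V_M. -/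
/-!
For `f x = M x + x + a`, expanding `f (f x)` leaves `x` and terms that vanish: `M (M x)`, `M a`, and
the pairs `M x + M x` and `a + a`. A fixed point `z` of `f` would satisfy `a = M (-z)`. Finally, if
the kernel were contained in the range, then rank-nullity would give `dim V ≤ 2 * dim (range M)`.
-/

universe u

section AddCommGroup

variable {G : Type*} [AddCommGroup G] {M : G →+ G} {a : G}

theorem involutive_map_add_add [Module (ZMod 2) G] (hM : ∀ x, M (M x) = 0)
    (ha : M a = 0) : Function.Involutive fun x ↦ M x + x + a := fun x ↦
  calc
    M (M x + x + a) + (M x + x + a) + a = (M x + M x) + (a + a) + x := by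
      rw [map_add, map_add, hM, ha]
      abel
    _ = x := by simp only [ZModModule.add_self, zero_add]

theorem map_add_add_ne_of_notMem_range (ha : a ∉ Set.range M) (x : G) : M x + x + a ≠ x := by
  intro hx
  have hMx : M x = -a := by
    rw [add_right_comm, add_eq_right] at hx
    exact eq_neg_of_add_eq_zero_left hx
  exact ha ⟨-x, by rw [map_neg, hMx, neg_neg]⟩

end AddCommGroup

section Rank

variable {R : Type*} {V : Type u} [Ring R] [HasRankNullity.{u} R] [AddCommGroup V] [Module R V]
  {M : Module.End R V}

theorem rank_le_two_mul_rank_range_of_ker_le_range (h : LinearMap.ker M ≤ LinearMap.range M) :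
    Module.rank R V ≤ 2 * Module.rank R (LinearMap.range M) :=
  calc
    Module.rank R V = Module.rank R (LinearMap.range M) + Module.rank R (LinearMap.ker M) :=
      (LinearMap.rank_range_add_rank_ker M).symm
    _ ≤ 2 * Module.rank R (LinearMap.range M) := by
      rw [two_mul]
      gcongr
      exact Submodule.rank_mono h

theorem exists_map_eq_zero_notMem_range
    (h : 2 * Module.rank R (LinearMap.range M) < Module.rank R V) :
    ∃ b, M b = 0 ∧ b ∉ Set.range M :=
  SetLike.not_le_iff_exists.mp fun hle ↦
    (rank_le_two_mul_rank_range_of_ker_le_range hle).not_gt h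

end Rank

section FiniteField

variable {k V : Type*} [DivisionRing k] [AddCommGroup V] [Module k V]
  [Fintype k] [Fintype V] {n : ℕ}

theorem finrank_eq_of_card_eq_card_pow (h : Fintype.card V = Fintype.card k ^ n) :
    Module.finrank k V = n :=
  Nat.pow_right_injective Fintype.one_lt_card (Module.card_eq_pow_finrank.symm.trans h)

theorem two_mul_rank_lt_rank_of_card_eq_card_pow (h : Fintype.card V = Fintype.card k ^ n)
    {W : Submodule k V} (hW : 2 * Module.finrank k W < n) :
    2 * Module.rank k W < Module.rank k V := by
  rw [← Module.finrank_eq_rank, ← Module.finrank_eq_rank, finrank_eq_of_card_eq_card_pow h]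
  exact_mod_cast hW

end FiniteField

theorem stmt_19_general {R : Type*} {V : Type u} [Ring R] [HasRankNullity.{u} R]
    [AddCommGroup V] [Module R V] [Module (ZMod 2) V] {M : Module.End R V} (hM : ∀ x, M (M x) = 0) :
    (∀ a, M a = 0 → a ∉ Set.range M →
      Function.Involutive (fun x ↦ M x + x + a) ∧ ∀ z, M z + z + a ≠ z) ∧
      (2 * Module.rank R (LinearMap.range M) < Module.rank R V →
        ∃ b, M b = 0 ∧ b ∉ Set.range M) :=
  ⟨fun _ ha ha' ↦
    ⟨involutive_map_add_add (M := M.toAddMonoidHom) hM ha,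
      map_add_add_ne_of_notMem_range (M := M.toAddMonoidHom) ha'⟩,
    exists_map_eq_zero_notMem_range⟩

/-- Suppose `F_{q^n}` has characteristic `2`, and let `M` be a nonzero
`F_q`-linear map of `F_{q^n}` with `M (M x) = 0` for all `x`.  Let `Z_M` be the kernel of
`M` and `V_M` its image, and suppose `a ∈ Z_M` but `a ∉ V_M`.  Then `f x = M x + x + a` is
an involution of `F_{q^n}` with no fixed points.  Moreover, if `dim_{F_q} V_M < n/2`, then
there exists `b ∈ Z_M` with `b ∉ V_M`. -/
theorem stmt_19 {Fq K : Type*} [Field Fq] [Field K] [Algebra Fq K]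
    [Fintype Fq] [Fintype K] (q n : ℕ)
    (hq : Fintype.card Fq = q) (hcard : Fintype.card K = q ^ n) (hn : 1 < n)
    (hchar : CharP K 2)
    (M : Module.End Fq K) (hM0 : M ≠ 0) (hM2 : ∀ x : K, M (M x) = 0)
    (a : K) (ha : M a = 0) (ha' : a ∉ Set.range ⇑M)
    (f : K → K) (hf : ∀ x, f x = M x + x + a) :
    (∀ z : K, f (f z) = z) ∧ (∀ z : K, f z ≠ z) ∧
      (2 * Module.finrank Fq ↥(LinearMap.range M) < n →
        ∃ b : K, M b = 0 ∧ b ∉ Set.range ⇑M) := by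
  obtain rfl : f = fun x ↦ M x + x + a := funext hf
  let _ : Module (ZMod 2) K := (ZMod.algebra K 2).toModule
  obtain ⟨involution, existence⟩ := stmt_19_general hM2
  obtain ⟨involutive, no_fixed_point⟩ := involution a ha ha'
  exact ⟨involutive, no_fixed_point, fun hlt ↦
    existence (two_mul_rank_lt_rank_of_card_eq_card_pow (hq ▸ hcard) hlt)⟩
end
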